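/- Let m ≥ 3 be odd, σ₀ ∈ {−1, +1}, μ ≥ 0, L, T, τ > 0, and let f : ℝ → ℝ be continuously differentiable. Let q₀, …, q_{m−1} : [0,T] × ℝ → ℝ be C¹ functions, L-periodic in x, satisfying ∂_t q₀ + ∂_x f(q₀) + σ₀ ∂_x q_{m−1} = 0 and, for j ∈ {1, …, m−1}, τ ∂_t q_j + σ₀ (−1)^j ∂_x q_{m−j−1} = σ₀ (−1)^j q_{m−j} − δ_{j,1} μ q₁ (where δ_{j,1} is the Kronecker delta). Then for all t ∈ [0,T], d/dt η(q)(t) = −μ ∫₀^L q₁(t,x)² dx ≤ 0; in particular η(q) is constant when μ = 0. -/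

import Mathlib

open MeasureTheory

/-- Partial derivative with respect to the first (time) variable. -/
noncomputable def pdt (u : ℝ → ℝ → ℝ) : ℝ → ℝ → ℝ :=
  fun t x => deriv (fun s => u s x) t

/-- Partial derivative with respect to the second (space) variable. -/
noncomputable def pdx (u : ℝ → ℝ → ℝ) : ℝ → ℝ → ℝ :=
  fun t x => deriv (fun y => u t y) x

lemma hasDerivAt_pdt {u : ℝ → ℝ → ℝ} (hu : ContDiff ℝ 1 (Function.uncurry u)) (t x : ℝ) :
    HasDerivAt (fun s => u s x) (pdt u t x) t := by
  have h : Differentiable ℝ (fun s => Function.uncurry u (s, x)) :=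
    (hu.differentiable one_ne_zero).comp (by fun_prop)
  exact (h t).hasDerivAt

lemma hasDerivAt_pdx {u : ℝ → ℝ → ℝ} (hu : ContDiff ℝ 1 (Function.uncurry u)) (t x : ℝ) :
    HasDerivAt (fun y => u t y) (pdx u t x) x := by
  have h : Differentiable ℝ (fun y => Function.uncurry u (t, y)) :=
    (hu.differentiable one_ne_zero).comp (by fun_prop)
  exact (h x).hasDerivAt

lemma continuous_uncurry_pdt {u : ℝ → ℝ → ℝ} (hu : ContDiff ℝ 1 (Function.uncurry u)) :
    Continuous (Function.uncurry (pdt u)) := by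
  have h : Function.uncurry (pdt u) = fun p => fderiv ℝ (Function.uncurry u) p (1, 0) := by
    ext ⟨t, x⟩
    have hp : HasDerivAt (fun s : ℝ => (s, x)) ((1 : ℝ), (0 : ℝ)) t :=
      (hasDerivAt_id t).prodMk (hasDerivAt_const t x)
    exact (((hu.differentiable one_ne_zero (t, x)).hasFDerivAt).comp_hasDerivAt t hp).deriv
  rw [h]
  exact (hu.continuous_fderiv one_ne_zero).clm_apply continuous_const

lemma continuous_pdx {u : ℝ → ℝ → ℝ} (hu : ContDiff ℝ 1 (Function.uncurry u)) (t : ℝ) :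
    Continuous (pdx u t) := by
  have h : ContDiff ℝ 1 (fun y => Function.uncurry u (t, y)) := hu.comp (by fun_prop)
  exact h.continuous_deriv_one

/-- Differentiation under the integral sign for a `C¹` integrand on a bounded interval. -/
lemma hasDerivAt_intervalIntegral_pdt {u : ℝ → ℝ → ℝ}
    (hu : ContDiff ℝ 1 (Function.uncurry u)) (a b t : ℝ) :
    HasDerivAt (fun s => ∫ x in a..b, u s x) (∫ x in a..b, pdt u t x) t := by
  have hcont (s : ℝ) : Continuous (u s) := hu.continuous.comp (by fun_prop : Continuous (s, ·))
  have hcont' := continuous_uncurry_pdt hu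
  obtain ⟨C, hC⟩ := ((isCompact_Icc (a := t - 1) (b := t + 1)).prod
    (isCompact_uIcc (a := a) (b := b))).exists_bound_of_continuousOn hcont'.continuousOn
  refine (intervalIntegral.hasDerivAt_integral_of_dominated_loc_of_deriv_le
    (F' := pdt u) (bound := fun _ => C)
    (Icc_mem_nhds (by linarith : t - 1 < t) (by linarith : t < t + 1))
    (.of_forall fun s => (hcont s).aestronglyMeasurable)
    ((hcont t).intervalIntegrable _ _)
    (hcont'.comp (by fun_prop : Continuous (t, ·))).aestronglyMeasurable
    (.of_forall fun x hx s hs => hC (s, x) ⟨hs, Set.uIoc_subset_uIcc hx⟩)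
    intervalIntegrable_const
    (.of_forall fun x _ s _ => hasDerivAt_pdt hu s x)).2

lemma sum_neg_one_pow_mul_reflect_eq_zero {m : ℕ} (hm : Odd m) (a : ℕ → ℝ) :
    ∑ j ∈ Finset.Ico 1 m, (-1 : ℝ) ^ j * (a j * a (m - j)) = 0 := by
  have h := Finset.sum_Ico_reflect (fun j => (-1 : ℝ) ^ j * (a j * a (m - j))) 1
    (Nat.le_succ m)
  rw [Nat.add_sub_cancel_left, Nat.add_sub_cancel] at h
  have h' : ∑ j ∈ Finset.Ico 1 m, (-1 : ℝ) ^ (m - j) * (a (m - j) * a (m - (m - j)))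
      = -∑ j ∈ Finset.Ico 1 m, (-1 : ℝ) ^ j * (a j * a (m - j)) := by
    rw [← Finset.sum_neg_distrib]
    refine Finset.sum_congr rfl fun j hj => ?_
    have hjm : j ≤ m := (Finset.mem_Ico.mp hj).2.le
    rw [Nat.sub_sub_self hjm]
    rcases Nat.even_or_odd j with he | ho
    · rw [he.neg_one_pow, (Nat.Odd.sub_even hjm hm he).neg_one_pow]; ring
    · rw [ho.neg_one_pow, (Nat.Odd.sub_odd hm ho).neg_one_pow]; ring
  linarith

lemma sum_neg_one_pow_mul_reflect_comm {m : ℕ} (hm : Odd m) (a b : ℕ → ℝ) :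
    ∑ j ∈ Finset.range m, (-1 : ℝ) ^ j * (a j * b (m - 1 - j))
      = ∑ j ∈ Finset.range m, (-1 : ℝ) ^ j * (b j * a (m - 1 - j)) := by
  rw [← Finset.sum_range_reflect]
  refine Finset.sum_congr rfl fun j hj => ?_
  have hjm : j ≤ m - 1 := Nat.le_sub_one_of_lt (Finset.mem_range.mp hj)
  have hm' : Even (m - 1) := Nat.Odd.sub_odd hm odd_one
  rw [Nat.sub_sub_self hjm]
  rcases Nat.even_or_odd j with he | ho
  · rw [he.neg_one_pow, (Even.tsub hm' he).neg_one_pow]; ring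
  · rw [ho.neg_one_pow, (Nat.Even.sub_odd hjm hm' ho).neg_one_pow]; ring

/-- The energy density of the hyperbolic system. -/
noncomputable def energyDensity (m : ℕ) (τ : ℝ) (q : ℕ → ℝ → ℝ → ℝ) (t x : ℝ) : ℝ :=
  q 0 t x ^ 2 / 2 + τ / 2 * ∑ j ∈ Finset.Icc 1 (m - 1), q j t x ^ 2

/-- The energy flux of the hyperbolic system. -/
noncomputable def energyFlux (m : ℕ) (σ₀ : ℝ) (f : ℝ → ℝ) (q : ℕ → ℝ → ℝ → ℝ) (t x : ℝ) : ℝ :=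
  (∫ v in (0 : ℝ)..q 0 t x, v * deriv f v)
    + σ₀ / 2 * ∑ j ∈ Finset.range m, (-1 : ℝ) ^ j * (q j t x * q (m - 1 - j) t x)

lemma contDiff_energyDensity {m : ℕ} (hm : 1 ≤ m) (τ : ℝ) {q : ℕ → ℝ → ℝ → ℝ}
    (hq : ∀ j < m, ContDiff ℝ 1 (Function.uncurry (q j))) :
    ContDiff ℝ 1 (Function.uncurry (energyDensity m τ q)) := by
  have h : ContDiff ℝ 1 fun p : ℝ × ℝ => Function.uncurry (q 0) p ^ 2 / 2
      + τ / 2 * ∑ j ∈ Finset.Icc 1 (m - 1), Function.uncurry (q j) p ^ 2 := by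
    refine (((hq 0 (by omega)).pow 2).div_const 2).add (contDiff_const.mul ?_)
    refine ContDiff.sum fun j hj => (hq j ?_).pow 2
    have := Finset.mem_Icc.mp hj
    omega
  exact h

lemma hasDerivAt_energyDensity {m : ℕ} (hm : 1 ≤ m) (τ : ℝ) {q : ℕ → ℝ → ℝ → ℝ}
    (hq : ∀ j < m, ContDiff ℝ 1 (Function.uncurry (q j))) (t x : ℝ) :
    HasDerivAt (fun s => energyDensity m τ q s x)
      (q 0 t x * pdt (q 0) t x
        + ∑ j ∈ Finset.Icc 1 (m - 1), q j t x * (τ * pdt (q j) t x)) t := by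
  have h0 := ((hasDerivAt_pdt (hq 0 (by omega)) t x).pow 2).div_const 2
  have hs := HasDerivAt.fun_sum (u := Finset.Icc 1 (m - 1)) fun j hj =>
    (hasDerivAt_pdt (hq j (by have := Finset.mem_Icc.mp hj; omega)) t x).pow 2
  refine (h0.add (hs.const_mul (τ / 2))).congr_deriv ?_
  rw [Finset.mul_sum]
  congr 1
  · norm_num; ring
  · refine Finset.sum_congr rfl fun j _ => ?_
    norm_num; ring

lemma hasDerivAt_energyFlux {m : ℕ} (hm : Odd m) (σ₀ : ℝ) {f : ℝ → ℝ} (hf : ContDiff ℝ 1 f)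
    {q : ℕ → ℝ → ℝ → ℝ} (hq : ∀ j < m, ContDiff ℝ 1 (Function.uncurry (q j))) (t x : ℝ) :
    HasDerivAt (energyFlux m σ₀ f q t)
      (q 0 t x * (deriv f (q 0 t x) * pdx (q 0) t x)
        + σ₀ * ∑ j ∈ Finset.range m, (-1 : ℝ) ^ j * (q j t x * pdx (q (m - 1 - j)) t x)) x := by
  have hpos := hm.pos
  have hG := ((continuous_id.mul hf.continuous_deriv_one).integral_hasStrictDerivAt
    0 (q 0 t x)).hasDerivAt.comp x (hasDerivAt_pdx (hq 0 hpos) t x)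
  have hs := HasDerivAt.fun_sum (u := Finset.range m) fun j hj =>
    ((hasDerivAt_pdx (hq j (Finset.mem_range.mp hj)) t x).mul
      (hasDerivAt_pdx (hq (m - 1 - j) (by omega)) t x)).const_mul ((-1 : ℝ) ^ j)
  refine (hG.add (hs.const_mul (σ₀ / 2))).congr_deriv ?_
  have hcomm := sum_neg_one_pow_mul_reflect_comm hm (fun j => pdx (q j) t x) (fun j => q j t x)
  simp only [mul_add, Finset.sum_add_distrib, hcomm, Pi.mul_apply, id]
  ring

/-- Local energy balance. -/
lemma pdt_energyDensity {m : ℕ} (hm : Odd m) (hm3 : 3 ≤ m) {σ₀ μ τ t x : ℝ}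
    {f : ℝ → ℝ} (hf : ContDiff ℝ 1 f) {q : ℕ → ℝ → ℝ → ℝ}
    (hq : ∀ j < m, ContDiff ℝ 1 (Function.uncurry (q j)))
    (heq₀ : pdt (q 0) t x + pdx (fun s y => f (q 0 s y)) t x + σ₀ * pdx (q (m - 1)) t x = 0)
    (heq : ∀ j ∈ Finset.Icc 1 (m - 1),
      τ * pdt (q j) t x + σ₀ * (-1 : ℝ) ^ j * pdx (q (m - j - 1)) t x
        = σ₀ * (-1 : ℝ) ^ j * q (m - j) t x - (if j = 1 then μ * q 1 t x else 0)) :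
    pdt (energyDensity m τ q) t x
      = -μ * q 1 t x ^ 2 - deriv (energyFlux m σ₀ f q t) x := by
  have hIcc : Finset.Icc 1 (m - 1) = Finset.Ico 1 m := by
    ext j; simp only [Finset.mem_Icc, Finset.mem_Ico]; omega
  have hfq : pdx (fun s y => f (q 0 s y)) t x = deriv f (q 0 t x) * pdx (q 0) t x :=
    ((hf.differentiable one_ne_zero _).hasDerivAt.comp x
      (hasDerivAt_pdx (hq 0 (by omega)) t x)).deriv
  rw [(hasDerivAt_energyFlux hm σ₀ hf hq t x).deriv,
    show pdt (energyDensity m τ q) t x = _ from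
      (hasDerivAt_energyDensity (by omega) τ hq t x).deriv]
  have hterm : ∀ j ∈ Finset.Icc 1 (m - 1), q j t x * (τ * pdt (q j) t x)
      = σ₀ * ((-1 : ℝ) ^ j * (q j t x * q (m - j) t x))
        - σ₀ * ((-1 : ℝ) ^ j * (q j t x * pdx (q (m - 1 - j)) t x))
        - (if j = 1 then μ * q 1 t x ^ 2 else 0) := by
    intro j hj
    have h := heq j hj
    rw [Nat.sub_right_comm] at h
    rw [eq_sub_of_add_eq h]
    split_ifs with h1
    · subst h1; ring
    · ring
  have hone : 1 ∈ Finset.Ico 1 m := Finset.mem_Ico.mpr ⟨le_rfl, by omega⟩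
  rw [Finset.sum_congr rfl hterm, hIcc, Finset.sum_sub_distrib, Finset.sum_sub_distrib,
    ← Finset.mul_sum, ← Finset.mul_sum,
    sum_neg_one_pow_mul_reflect_eq_zero hm (fun j => q j t x), Finset.sum_ite_eq', if_pos hone,
    Finset.range_eq_Ico, Finset.sum_eq_sum_Ico_succ_bot hm.pos, ← hfq]
  simp only [pow_zero, Nat.sub_zero, zero_add]
  linear_combination q 0 t x * heq₀

lemma integral_deriv_energyFlux {m : ℕ} (hm : Odd m) (σ₀ L : ℝ) {f : ℝ → ℝ}
    (hf : ContDiff ℝ 1 f) {q : ℕ → ℝ → ℝ → ℝ}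
    (hq : ∀ j < m, ContDiff ℝ 1 (Function.uncurry (q j))) {t : ℝ}
    (hper : ∀ j < m, Function.Periodic (q j t) L) :
    IntervalIntegrable (deriv (energyFlux m σ₀ f q t)) volume 0 L ∧
      ∫ x in (0 : ℝ)..L, deriv (energyFlux m σ₀ f q t) x = 0 := by
  have hpos := hm.pos
  have hcq (j : ℕ) (hj : j < m) : Continuous (q j t) :=
    (hq j hj).continuous.comp (by fun_prop : Continuous (t, ·))
  have hcont : Continuous (deriv (energyFlux m σ₀ f q t)) := by
    rw [funext fun x => (hasDerivAt_energyFlux hm σ₀ hf hq t x).deriv]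
    refine ((hcq 0 hpos).mul ((hf.continuous_deriv_one.comp (hcq 0 hpos)).mul
      (continuous_pdx (hq 0 hpos) t))).add (continuous_const.mul ?_)
    exact continuous_finsetSum _ fun j hj => continuous_const.mul
      ((hcq j (Finset.mem_range.mp hj)).mul (continuous_pdx (hq (m - 1 - j) (by omega)) t))
  have hint := hcont.intervalIntegrable (μ := volume) 0 L
  refine ⟨hint, ?_⟩
  rw [intervalIntegral.integral_deriv_eq_sub
    (fun x _ => (hasDerivAt_energyFlux hm σ₀ hf hq t x).differentiableAt) hint, sub_eq_zero]
  have hL (j : ℕ) (hj : j < m) : q j t L = q j t 0 := by simpa using hper j hj 0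
  unfold energyFlux
  rw [hL 0 hpos]
  congr 2
  refine Finset.sum_congr rfl fun j hj => ?_
  rw [hL j (Finset.mem_range.mp hj), hL (m - 1 - j) (by omega)]

/-- Energy dissipation for the generalized odd-order hyperbolic approximation of
`∂_t u + ∂_x f(u) - μ ∂_x² u + σ₀ ∂_x^m u = 0`:
`d/dt η(q)(t) = -μ ∫₀^L q₁² dx ≤ 0`; in particular the energy is constant
when `μ = 0`. -/
theorem odd_order_hyperbolic_energy_dissipation
    (m : ℕ) (hm : Odd m) (hm3 : 3 ≤ m)
    (σ₀ : ℝ) (hσ : σ₀ = 1 ∨ σ₀ = -1) (μ : ℝ) (hμ : 0 ≤ μ)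
    (L T τ : ℝ) (hL : 0 < L) (hT : 0 < T) (hτ : 0 < τ)
    (f : ℝ → ℝ) (hf : ContDiff ℝ 1 f)
    (q : ℕ → ℝ → ℝ → ℝ)
    (hq : ∀ j < m, ContDiff ℝ 1 (Function.uncurry (q j)))
    (hper : ∀ j < m, ∀ t, Function.Periodic (q j t) L)
    (heq₀ : ∀ t ∈ Set.Icc (0:ℝ) T, ∀ x : ℝ,
      pdt (q 0) t x + pdx (fun s y => f (q 0 s y)) t x
        + σ₀ * pdx (q (m - 1)) t x = 0)
    (heq : ∀ j ∈ Finset.Icc 1 (m - 1), ∀ t ∈ Set.Icc (0:ℝ) T, ∀ x : ℝ,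
      τ * pdt (q j) t x + σ₀ * (-1 : ℝ) ^ j * pdx (q (m - j - 1)) t x
        = σ₀ * (-1 : ℝ) ^ j * q (m - j) t x
          - (if j = 1 then μ * q 1 t x else 0)) :
    (∀ t ∈ Set.Icc (0:ℝ) T,
      HasDerivWithinAt
        (fun s => ∫ x in (0:ℝ)..L,
          (q 0 s x ^ 2 / 2 + τ / 2 * ∑ j ∈ Finset.Icc 1 (m - 1), q j s x ^ 2))
        (- μ * ∫ x in (0:ℝ)..L, q 1 t x ^ 2)
        (Set.Icc (0:ℝ) T) t ∧
      (- μ * ∫ x in (0:ℝ)..L, q 1 t x ^ 2) ≤ 0) ∧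
    (μ = 0 → ∀ t ∈ Set.Icc (0:ℝ) T,
      (∫ x in (0:ℝ)..L,
        (q 0 t x ^ 2 / 2 + τ / 2 * ∑ j ∈ Finset.Icc 1 (m - 1), q j t x ^ 2))
      = ∫ x in (0:ℝ)..L,
        (q 0 0 x ^ 2 / 2 + τ / 2 * ∑ j ∈ Finset.Icc 1 (m - 1), q j 0 x ^ 2)) := by
  have hderiv : ∀ t ∈ Set.Icc (0:ℝ) T,
      HasDerivAt (fun s => ∫ x in (0:ℝ)..L, energyDensity m τ q s x)
        (- μ * ∫ x in (0:ℝ)..L, q 1 t x ^ 2) t := by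
    intro t ht
    refine (hasDerivAt_intervalIntegral_pdt
      (contDiff_energyDensity (by omega) τ hq) 0 L t).congr_deriv ?_
    obtain ⟨hint, hzero⟩ := integral_deriv_energyFlux hm σ₀ L hf hq (fun j hj => hper j hj t)
    have hq1 : Continuous (q 1 t) :=
      (hq 1 (by omega)).continuous.comp (by fun_prop : Continuous (t, ·))
    rw [intervalIntegral.integral_congr fun x _ => pdt_energyDensity hm hm3 hf hq
        (heq₀ t ht x) (fun j hj => heq j hj t ht x),
      intervalIntegral.integral_sub (Continuous.intervalIntegrable (by fun_prop) _ _) hint, hzero, sub_zero, intervalIntegral.integral_const_mul]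
  refine ⟨fun t ht => ⟨(hderiv t ht).hasDerivWithinAt, ?_⟩, fun hμ0 t ht => ?_⟩
  · exact mul_nonpos_of_nonpos_of_nonneg (neg_nonpos.mpr hμ)
      (intervalIntegral.integral_nonneg hL.le fun x _ => sq_nonneg _)
  · refine constant_of_has_deriv_right_zero
      (fun s hs => (hderiv s hs).continuousAt.continuousWithinAt)
      (fun s hs => ?_) t ht
    simpa [hμ0] using (hderiv s ⟨hs.1, hs.2.le⟩).hasDerivWithinAt
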